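/- Let φ : [0,∞) → ℝ be continuously differentiable, such that lim_{t→∞} φ(t) exists and the derivative φ' is (Lebesgue) integrable on [0,∞). Then for every x with 0 < x ≤ L, lim_{t→∞} ∫₀^t θ_x(x, t − τ) · φ'(τ) dτ = 0. -/

import Mathlib

/-!
The space variable enters `K` only through the Gaussian `exp (-ξ² / (4 ε y))`, of which `K` is a
linear functional. Since `x > 0` keeps every translate `x + 2nL` at distance at least a multiple of
`|n| + 1` from the origin, the elementary inequality `u² / 2 ≤ exp u` gives the Gaussian, as a
function of `ξ`, a Lipschitz constant `O(y / (|n| + 1)³)` near the `n`-th translate: the singularity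
at `y = 0` is gone and the sum over `n` converges. Bessel's integral (`J1_eq_integral`) gives
`|J1 z| ≤ |z|`, which cancels the singularity `1 / √(t - y)` in the memory term; as
`exp (-a y - β (t - y)) ≤ exp (-min a β * t)`, the whole kernel inherits a bound by `profile t`, a
continuous function vanishing for `t ≤ 0` and decaying exponentially.

Hence `theta` is Lipschitz near `x` with constant `O(profile t)` (`theta_lip`), so that
`|θ_x(x, t)| ≤ D * profile t` (`thetaX_le`). The convolution is then dominated by
`∫ D * profile (t - τ) * |φ' τ|` over `τ > 0`, which tends to `0` by dominated convergence because
`profile` is bounded and tends to `0`, and `φ'` is integrable.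
-/


open Real MeasureTheory Set Filter Topology intervalIntegral

/-- Bessel function of the first kind of order 1, via its power series. -/
noncomputable def J1 (z : ℝ) : ℝ :=
  ∑' k : ℕ, ((-1 : ℝ) ^ k / ((Nat.factorial k : ℝ) * (Nat.factorial (k + 1) : ℝ)))
      * (z / 2) ^ (2 * k + 1)

/-- The fundamental solution `K(x,t)` of the integro-differential operator. -/
noncomputable def Kfun (ε a b β : ℝ) (x t : ℝ) : ℝ :=
  (1 / (2 * Real.sqrt (Real.pi * ε))) *
    (Real.exp (-(|x| / Real.sqrt ε) ^ 2 / (4 * t) - a * t) / Real.sqrt t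
      - b * ∫ y in (0:ℝ)..t,
          (Real.exp (-(|x| / Real.sqrt ε) ^ 2 / (4 * y) - a * y) / Real.sqrt (t - y))
            * Real.exp (-β * (t - y)) * J1 (2 * Real.sqrt (b * y * (t - y))))

/-- The theta function `θ(x,t) = Σ_{n ∈ ℤ} K(x + 2nL, t)`. -/
noncomputable def theta (ε a b β L : ℝ) (x t : ℝ) : ℝ :=
  ∑' n : ℤ, Kfun ε a b β (x + 2 * (n : ℝ) * L) t

/-- The partial derivative of `θ` with respect to `x`. -/
noncomputable def thetaX (ε a b β L : ℝ) (x t : ℝ) : ℝ :=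
  deriv (fun y : ℝ => theta ε a b β L y t) x

/-! ### The Bessel function -/

/-- Bessel's integral representation, obtained by expanding the outer sine and integrating
term by term with Wallis' formula for `∫ sin ^ (2k+2)`. -/
lemma J1_eq_integral (z : ℝ) :
    J1 z = (1 / π) * ∫ θ in (0:ℝ)..π, sin (z * sin θ) * sin θ := by
  have key : HasSum
      (fun k : ℕ => ∫ θ in (0:ℝ)..π,
        (-1) ^ k * (z * sin θ) ^ (2 * k + 1) / (Nat.factorial (2 * k + 1) : ℝ) * sin θ)
      (∫ θ in (0:ℝ)..π, sin (z * sin θ) * sin θ) := by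
    refine intervalIntegral.hasSum_integral_of_dominated_convergence
      (fun k _ => |z| ^ (2 * k + 1) / (Nat.factorial (2 * k + 1) : ℝ)) ?_ ?_ ?_ ?_ ?_
    · intro k
      exact (Continuous.aestronglyMeasurable (by fun_prop))
    · intro k
      refine Eventually.of_forall fun θ _ => ?_
      have h1 : |sin θ| ≤ 1 := abs_sin_le_one θ
      rw [norm_mul, norm_div, norm_mul, norm_pow, norm_pow, norm_mul]
      simp only [Real.norm_eq_abs, abs_neg, abs_one, one_pow, one_mul, Nat.abs_cast]
      calc (|z| * |sin θ|) ^ (2 * k + 1) / (Nat.factorial (2 * k + 1) : ℝ) * |sin θ|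
          ≤ (|z| * 1) ^ (2 * k + 1) / (Nat.factorial (2 * k + 1) : ℝ) * 1 := by gcongr
        _ = _ := by ring
    · refine Eventually.of_forall fun θ _ => ?_
      exact (Real.hasSum_sinh |z|).summable
    · exact intervalIntegrable_const
    · refine Eventually.of_forall fun θ _ => ?_
      exact (Real.hasSum_sin (z * sin θ)).mul_right _
  have h2 : (∫ θ in (0:ℝ)..π, sin (z * sin θ) * sin θ) = π * J1 z := by
    rw [← key.tsum_eq, J1, ← tsum_mul_left]
    refine tsum_congr fun k => ?_
    have e : ∀ θ : ℝ,
        (-1) ^ k * (z * sin θ) ^ (2 * k + 1) / (Nat.factorial (2 * k + 1) : ℝ) * sin θ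
        = ((-1) ^ k * z ^ (2 * k + 1) / (Nat.factorial (2 * k + 1) : ℝ))
          * sin θ ^ (2 * (k + 1)) := by
      intro θ; ring
    simp_rw [e]
    rw [intervalIntegral.integral_const_mul, integral_sin_pow_even]
    have hp : ∀ k : ℕ, (∏ i ∈ Finset.range (k + 1), ((2 * i + 1 : ℝ) / (2 * i + 2)))
        = (Nat.factorial (2 * k + 1) : ℝ) /
          (2 ^ (2 * k + 1) * (Nat.factorial k : ℝ) * (Nat.factorial (k + 1) : ℝ)) := by
      intro k
      induction k with
      | zero => simp
      | succ k ih =>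
        rw [Finset.prod_range_succ, ih]
        have f1 : (Nat.factorial (2 * (k + 1) + 1) : ℝ)
            = (2 * k + 3) * (2 * k + 2) * (Nat.factorial (2 * k + 1) : ℝ) := by
          rw [show 2 * (k + 1) + 1 = (2 * k + 1) + 1 + 1 by ring, Nat.factorial_succ,
            Nat.factorial_succ]
          push_cast; ring
        rw [f1, Nat.factorial_succ (k + 1), Nat.factorial_succ k]
        have := Nat.factorial_pos k
        push_cast
        field_simp
        ring
    rw [hp]
    have := Nat.factorial_pos k
    have := Nat.factorial_pos (k + 1)
    have := Nat.factorial_pos (2 * k + 1)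
    rw [div_pow]
    field_simp
  rw [h2]
  field_simp

lemma J1_dist_le (z w : ℝ) : |J1 z - J1 w| ≤ |z - w| := by
  have i : ∀ z : ℝ, IntervalIntegrable (fun θ => sin (z * sin θ) * sin θ) volume 0 π :=
    fun z => Continuous.intervalIntegrable (by fun_prop) _ _
  rw [J1_eq_integral, J1_eq_integral, ← mul_sub, ← intervalIntegral.integral_sub (i z) (i w),
    abs_mul]
  have hb : ‖∫ θ in (0:ℝ)..π, (sin (z * sin θ) * sin θ - sin (w * sin θ) * sin θ)‖
      ≤ |z - w| * |π - 0| := by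
    refine intervalIntegral.norm_integral_le_of_norm_le_const fun θ _ => ?_
    have h1 : |sin θ| ≤ 1 := abs_sin_le_one θ
    have h2 : |sin (z * sin θ) - sin (w * sin θ)| ≤ |z * sin θ - w * sin θ| := by
      simpa [Real.dist_eq] using Real.lipschitzWith_sin.dist_le_mul (z * sin θ) (w * sin θ)
    rw [← sub_mul, norm_mul, Real.norm_eq_abs, Real.norm_eq_abs]
    rw [← sub_mul, abs_mul] at h2
    have : |z - w| * |sin θ| ≤ |z - w| * 1 := by gcongr
    calc _ ≤ |z - w| * 1 := by
          refine (mul_le_of_le_one_right (abs_nonneg _) h1).trans (h2.trans this)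
      _ = _ := mul_one _
  rw [sub_zero, abs_of_pos pi_pos, Real.norm_eq_abs] at hb
  rw [abs_of_pos (by positivity)]
  calc _ ≤ 1 / π * (|z - w| * π) := by gcongr
    _ = _ := by field_simp

lemma J1_zero : J1 0 = 0 := by simp [J1_eq_integral]

/-- The power series alone would only bound `J1` by a function growing exponentially, which the
factors `exp (-a y - β (t - y))` absorb only for small `b`; the linear bound works for every `b`. -/
lemma J1_abs_le (z : ℝ) : |J1 z| ≤ |z| := by simpa [J1_zero] using J1_dist_le z 0

lemma J1_continuous : Continuous J1 :=
  (LipschitzWith.of_dist_le_mul (K := 1) fun z w => by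
    simpa [Real.dist_eq] using J1_dist_le z w).continuous

/-! ### Gaussian estimates -/

lemma gauss_le {s r : ℝ} (hs : 0 < s) (hr : 0 < r) : exp (-r ^ 2 / s) ≤ s / r ^ 2 := by
  have h := Real.add_one_le_exp (r ^ 2 / s)
  rw [neg_div, exp_neg, inv_le_comm₀ (exp_pos _) (by positivity), inv_div]
  linarith

lemma gauss_deriv_le {s r : ℝ} (hs : 0 < s) (hr : 0 < r) :
    2 * r / s * exp (-r ^ 2 / s) ≤ 4 * s / r ^ 3 := by
  have h := Real.quadratic_le_exp_of_nonneg (x := r ^ 2 / s) (by positivity)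
  have h0 : 0 < r ^ 2 / s := by positivity
  have h1 : exp (-r ^ 2 / s) ≤ 2 * s ^ 2 / r ^ 4 := by
    rw [neg_div, exp_neg, inv_le_comm₀ (exp_pos _) (by positivity), inv_div]
    have : r ^ 4 / (2 * s ^ 2) = (r ^ 2 / s) ^ 2 / 2 := by field_simp
    linarith
  calc _ ≤ 2 * r / s * (2 * s ^ 2 / r ^ 4) := by gcongr
    _ = _ := by field_simp; ring

lemma gauss_lip {s R p q : ℝ} (hs : 0 < s) (hR : 0 < R) (hp : R ≤ p) (hq : R ≤ q) :
    |exp (-p ^ 2 / s) - exp (-q ^ 2 / s)| ≤ 4 * s / R ^ 3 * |p - q| := by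
  have hd : ∀ r ∈ Set.Ici R, HasDerivWithinAt (fun r : ℝ => exp (-r ^ 2 / s))
      (-(2 * r / s * exp (-r ^ 2 / s))) (Set.Ici R) r := by
    intro r _
    have h : HasDerivAt (fun r : ℝ => -r ^ 2 / s) (-(2 * r) / s) r := by
      simpa using (hasDerivAt_pow 2 r).neg.div_const s
    have h' := h.exp.hasDerivWithinAt (s := Set.Ici R)
    exact h'.congr_deriv (by ring)
  have := Convex.norm_image_sub_le_of_norm_hasDerivWithin_le hd (C := 4 * s / R ^ 3) ?_
    (convex_Ici R) hq hp
  · simpa only [Real.norm_eq_abs] using this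
  · intro r hr
    have hr' : R ≤ r := hr
    have hr0 : 0 < r := hR.trans_le hr'
    rw [norm_neg, Real.norm_eq_abs, abs_of_pos (by positivity)]
    refine (gauss_deriv_le hs hr0).trans ?_
    gcongr

/-! ### The kernel as a functional of its Gaussian factor -/

/-- The factor `exp (-ξ² / (4 ε y))`, the only part of the kernel depending on the space
variable `ξ`. -/
noncomputable def gaussFactor (ε ξ y : ℝ) : ℝ := exp (-|ξ| ^ 2 / (4 * ε * y))

/-- The weight against which the Gaussian factor is integrated in the memory term of the kernel. -/
noncomputable def memWeight (a b β t y : ℝ) : ℝ :=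
  exp (-a * y) / √(t - y) * exp (-β * (t - y)) * J1 (2 * √(b * y * (t - y)))

/-- The linear functional of the Gaussian factor `g` that gives the kernel at time `t`, up to the
normalising constant; see `Kfun_eq`. -/
noncomputable def kernelFunctional (a b β t : ℝ) (g : ℝ → ℝ) : ℝ :=
  g t * (exp (-a * t) / √t) - b * ∫ y in (0:ℝ)..t, g y * memWeight a b β t y

lemma Kfun_eq {ε : ℝ} (a b β ξ t : ℝ) (hε : 0 < ε) :
    Kfun ε a b β ξ t = 1 / (2 * √(π * ε)) * kernelFunctional a b β t (gaussFactor ε ξ) := by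
  have h : ∀ y, exp (-(|ξ| / √ε) ^ 2 / (4 * y) - a * y) = gaussFactor ε ξ y * exp (-a * y) := by
    intro y
    rw [gaussFactor, ← exp_add, div_pow, sq_sqrt hε.le]
    congr 1
    rw [← neg_div, div_div]
    ring_nf
  unfold Kfun kernelFunctional memWeight
  simp_rw [h]
  congr 2
  · rw [mul_div_assoc]
  · congr 1
    refine intervalIntegral.integral_congr fun y _ => ?_
    ring

lemma gaussFactor_measurable (ε ξ : ℝ) : Measurable (gaussFactor ε ξ) := by
  unfold gaussFactor; fun_prop

lemma memWeight_measurable (a b β t : ℝ) : Measurable (memWeight a b β t) := by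
  have := J1_continuous.measurable
  unfold memWeight; fun_prop

lemma memWeight_le {a b β t y : ℝ} (hb : 0 < b)
    (hy : 0 < y) (hyt : y ≤ t) :
    |memWeight a b β t y| ≤ 2 * √(b * t) * exp (-min a β * t) := by
  have e1 : exp (-a * y) * exp (-β * (t - y)) ≤ exp (-min a β * t) := by
    rw [← exp_add, exp_le_exp]
    nlinarith [min_le_left a β, min_le_right a β]
  -- At `y = t` the weight is a junk `0`, as the denominator is `√0`.
  rcases hyt.eq_or_lt with rfl | hlt
  · simp [memWeight]; positivity
  have hs : 0 < t - y := sub_pos.2 hlt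
  have ht : 0 < t := hy.trans hlt
  have e2 : |J1 (2 * √(b * y * (t - y)))| ≤ 2 * √(b * t) * √(t - y) := by
    refine (J1_abs_le _).trans ?_
    rw [abs_of_nonneg (by positivity), mul_assoc 2, ← sqrt_mul (by positivity)]
    gcongr
  have hq : 0 < √(t - y) := sqrt_pos.2 hs
  rw [memWeight, abs_mul, abs_of_pos (by positivity)]
  calc _ ≤ exp (-a * y) / √(t - y) * exp (-β * (t - y)) * (2 * √(b * t) * √(t - y)) := by gcongr
    _ = 2 * √(b * t) * (exp (-a * y) * exp (-β * (t - y))) := by field_simp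
    _ ≤ _ := by gcongr

/-- The exponentially decaying function of time that dominates the kernel, its Lipschitz constants
in space, and finally `θ_x`. It vanishes for `t ≤ 0` since `√` does. -/
noncomputable def profile (a b β t : ℝ) : ℝ :=
  √t * exp (-a * t) + b * (t ^ 2 * (2 * √(b * t) * exp (-min a β * t)))

lemma integrable_mul_memWeight {a b β t B : ℝ} (hb : 0 < b)
    (ht : 0 < t) {g : ℝ → ℝ} (hg : Measurable g) (hB : ∀ y, 0 < y → y ≤ t → |g y| ≤ B) :
    IntervalIntegrable (fun y => g y * memWeight a b β t y) volume 0 t := by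
  rw [intervalIntegrable_iff_integrableOn_Ioc_of_le ht.le]
  refine Measure.integrableOn_of_bounded (M := B * (2 * √(b * t) * exp (-min a β * t))) (by simp)
    (hg.mul (memWeight_measurable _ _ _ _)).aestronglyMeasurable ?_
  refine (ae_restrict_iff' measurableSet_Ioc).2 (Eventually.of_forall fun y hy => ?_)
  rw [norm_mul]
  exact mul_le_mul (hB y hy.1 hy.2) (memWeight_le hb hy.1 hy.2) (norm_nonneg _)
    ((abs_nonneg _).trans (hB y hy.1 hy.2))

lemma kernelFunctional_le {a b β t B : ℝ} (hb : 0 < b)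
    (ht : 0 < t) {g : ℝ → ℝ} (hB : ∀ y, 0 < y → y ≤ t → |g y| ≤ B * t) :
    |kernelFunctional a b β t g| ≤ B * profile a b β t := by
  have hBt := (abs_nonneg _).trans (hB t ht le_rfl)
  have hi : ‖∫ y in (0:ℝ)..t, g y * memWeight a b β t y‖
      ≤ (B * t) * (2 * √(b * t) * exp (-min a β * t)) * |t - 0| := by
    refine intervalIntegral.norm_integral_le_of_norm_le_const fun y hy => ?_
    rw [uIoc_of_le ht.le] at hy
    rw [norm_mul]
    exact mul_le_mul (hB y hy.1 hy.2) (memWeight_le hb hy.1 hy.2) (norm_nonneg _) hBt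
  rw [sub_zero, abs_of_pos ht, norm_eq_abs] at hi
  have hst : √t * √t = t := mul_self_sqrt ht.le
  have hst' : 0 < √t := sqrt_pos.2 ht
  calc |kernelFunctional a b β t g|
      ≤ |g t| * (exp (-a * t) / √t) + b * |∫ y in (0:ℝ)..t, g y * memWeight a b β t y| := by
        refine (norm_sub_le (g t * (exp (-a * t) / √t)) _).trans_eq ?_
        simp only [Real.norm_eq_abs]
        rw [abs_mul, abs_mul, abs_of_pos hb, abs_of_pos (a := exp (-a * t) / √t) (by positivity)]
    _ ≤ (B * t) * (exp (-a * t) / √t)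
        + b * ((B * t) * (2 * √(b * t) * exp (-min a β * t)) * t) := by
        gcongr
        exact hB t ht le_rfl
    _ = B * profile a b β t := by
        have : t * (exp (-a * t) / √t) = √t * exp (-a * t) := by
          field_simp; rw [sq, hst]
        rw [profile, mul_assoc B t, this]; ring

lemma kernelFunctional_sub {a b β t B C : ℝ} (hb : 0 < b)
    (ht : 0 < t) {g h : ℝ → ℝ} (hg : Measurable g) (hh : Measurable h)
    (hB : ∀ y, 0 < y → y ≤ t → |g y| ≤ B) (hC : ∀ y, 0 < y → y ≤ t → |h y| ≤ C) :
    kernelFunctional a b β t g - kernelFunctional a b β t h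
      = kernelFunctional a b β t (fun y => g y - h y) := by
  unfold kernelFunctional
  simp_rw [sub_mul]
  rw [intervalIntegral.integral_sub (integrable_mul_memWeight hb ht hg hB)
    (integrable_mul_memWeight hb ht hh hC)]
  ring

/-! ### Bounds on the kernel and its lattice sum -/

lemma gaussFactor_le {ε R ξ t y : ℝ} (hε : 0 < ε) (hR : 0 < R) (hξ : R ≤ |ξ|) (hy : 0 < y)
    (hyt : y ≤ t) : |gaussFactor ε ξ y| ≤ 4 * ε / R ^ 2 * t := by
  rw [gaussFactor, abs_of_pos (exp_pos _)]
  refine (gauss_le (by positivity) (hR.trans_le hξ)).trans ?_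
  calc 4 * ε * y / |ξ| ^ 2 ≤ 4 * ε * t / R ^ 2 := by
        have := hy.trans_le hyt
        gcongr
    _ = _ := by ring

lemma gaussFactor_sub_le {ε R ξ η t y : ℝ} (hε : 0 < ε) (hR : 0 < R) (hξ : R ≤ |ξ|)
    (hη : R ≤ |η|) (hy : 0 < y) (hyt : y ≤ t) :
    |gaussFactor ε ξ y - gaussFactor ε η y| ≤ 16 * ε / R ^ 3 * |ξ - η| * t := by
  refine (gauss_lip (by positivity) hR hξ hη).trans ?_
  calc 4 * (4 * ε * y) / R ^ 3 * |(|ξ| - |η|)| ≤ 4 * (4 * ε * t) / R ^ 3 * |ξ - η| := by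
        have := hy.trans_le hyt
        exact mul_le_mul (by gcongr) (abs_abs_sub_abs_le ξ η) (abs_nonneg _) (by positivity)
    _ = _ := by ring

lemma Kfun_le {ε a b β R ξ t : ℝ} (hε : 0 < ε) (hb : 0 < b)
    (hR : 0 < R) (hξ : R ≤ |ξ|) (ht : 0 < t) :
    |Kfun ε a b β ξ t| ≤ 1 / (2 * √(π * ε)) * (4 * ε / R ^ 2 * profile a b β t) := by
  rw [Kfun_eq _ _ _ _ _ hε, abs_mul, abs_of_nonneg (by positivity)]
  gcongr
  exact kernelFunctional_le hb ht fun y hy hyt => gaussFactor_le hε hR hξ hy hyt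

lemma Kfun_sub_le {ε a b β R ξ η t : ℝ} (hε : 0 < ε) (hb : 0 < b)
    (hR : 0 < R) (hξ : R ≤ |ξ|) (hη : R ≤ |η|) (ht : 0 < t) :
    |Kfun ε a b β ξ t - Kfun ε a b β η t|
      ≤ 1 / (2 * √(π * ε)) * (16 * ε / R ^ 3 * |ξ - η| * profile a b β t) := by
  rw [Kfun_eq _ _ _ _ _ hε, Kfun_eq _ _ _ _ _ hε, ← mul_sub, abs_mul,
    abs_of_nonneg (a := 1 / (2 * √(π * ε))) (by positivity),
    kernelFunctional_sub hb ht (gaussFactor_measurable _ _) (gaussFactor_measurable _ _)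
      (fun y hy hyt => gaussFactor_le hε hR hξ hy hyt)
      (fun y hy hyt => gaussFactor_le hε hR hη hy hyt)]
  gcongr
  exact kernelFunctional_le hb ht fun y hy hyt => gaussFactor_sub_le hε hR hξ hη hy hyt

/-- Near `x ∈ (0, L]` the translates `y + 2nL` stay away from `0`, at a distance growing linearly
in `n`. The constant `1 / 4` is dictated by `n = -1`, where the distance can be close to `x / 2`. -/
lemma lattice_dist {L x y : ℝ} (hx : 0 < x) (hxL : x ≤ L) (hy : y ∈ Set.Ioo (x / 2) (3 * x / 2))
    (n : ℤ) : x / 4 * (|(n : ℝ)| + 1) ≤ |y + 2 * n * L| := by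
  obtain ⟨h1, h2⟩ := hy
  rcases le_or_gt 0 n with hn | hn
  · have hn' : (0:ℝ) ≤ n := by exact_mod_cast hn
    rw [abs_of_nonneg hn']
    refine le_trans ?_ (le_abs_self _)
    nlinarith
  · have hn' : (n:ℝ) ≤ -1 := by exact_mod_cast Int.le_sub_one_of_lt hn
    rw [abs_of_neg (by linarith)]
    refine le_trans ?_ (neg_le_abs _)
    nlinarith

lemma summable_lattice {k : ℕ} (hk : 1 < k) :
    Summable fun n : ℤ => 1 / (|(n : ℝ)| + 1) ^ k := by
  have h : Summable fun n : ℕ => 1 / ((n : ℝ) + 1) ^ k := by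
    simpa using (summable_nat_add_iff 1).2 (Real.summable_one_div_nat_pow.2 hk)
  refine Summable.of_nat_of_neg ?_ ?_ <;> simpa using h

lemma theta_lip {ε a b β L x y z t : ℝ} (hε : 0 < ε) (hb : 0 < b)
    (hx : 0 < x) (hxL : x ≤ L) (hy : y ∈ Set.Ioo (x / 2) (3 * x / 2))
    (hz : z ∈ Set.Ioo (x / 2) (3 * x / 2)) (ht : 0 < t) :
    |theta ε a b β L y t - theta ε a b β L z t|
      ≤ 1 / (2 * √(π * ε)) * (16 * ε / (x / 4) ^ 3) * (∑' n : ℤ, 1 / (|(n : ℝ)| + 1) ^ 3)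
        * profile a b β t * |y - z| := by
  have hs : ∀ y ∈ Set.Ioo (x / 2) (3 * x / 2),
      Summable fun n : ℤ => Kfun ε a b β (y + 2 * (n : ℝ) * L) t := by
    intro y hy
    refine Summable.of_norm_bounded ((summable_lattice one_lt_two).mul_left
      (1 / (2 * √(π * ε)) * (4 * ε / (x / 4) ^ 2 * profile a b β t))) fun n => ?_
    refine (Kfun_le hε hb (by positivity) (lattice_dist hx hxL hy n) ht).trans_eq ?_
    rw [mul_pow]
    field_simp
  rw [theta, theta, ← (hs y hy).tsum_sub (hs z hz)]
  have hS := ((summable_lattice (k := 3) (by norm_num)).hasSum.mul_left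
    (1 / (2 * √(π * ε)) * (16 * ε / (x / 4) ^ 3) * (profile a b β t * |y - z|)))
  rw [← Real.norm_eq_abs]
  refine (tsum_of_norm_bounded hS fun n => ?_).trans (le_of_eq ?_)
  swap
  · ring
  rw [Real.norm_eq_abs]
  refine (Kfun_sub_le hε hb (by positivity) (lattice_dist hx hxL hy n)
    (lattice_dist hx hxL hz n) ht).trans_eq ?_
  rw [add_sub_add_right_eq_sub, mul_pow]
  field_simp

/-! ### The time profile -/

lemma profile_nonneg {a b β t : ℝ} (hb : 0 < b) : 0 ≤ profile a b β t := by
  unfold profile; positivity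

lemma profile_continuous (a b β : ℝ) : Continuous (profile a b β) := by
  unfold profile; fun_prop

lemma profile_of_nonpos {a b β t : ℝ} (hb : 0 < b) (ht : t ≤ 0) : profile a b β t = 0 := by
  have : b * t ≤ 0 := mul_nonpos_of_nonneg_of_nonpos hb.le ht
  simp [profile, sqrt_eq_zero_of_nonpos ht, sqrt_eq_zero_of_nonpos this]

lemma profile_tendsto {a b β : ℝ} (ha : 0 < a) (hb : 0 < b) (hβ : 0 < β) :
    Tendsto (profile a b β) atTop (𝓝 0) := by
  have h1 := tendsto_rpow_mul_exp_neg_mul_atTop_nhds_zero (1 / 2) a ha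
  have h2 := (tendsto_rpow_mul_exp_neg_mul_atTop_nhds_zero (2 + 1 / 2) (min a β)
    (lt_min ha hβ)).const_mul (2 * b * √b)
  have h3 := h1.add h2
  simp only [mul_zero, add_zero] at h3
  refine h3.congr' ?_
  filter_upwards [eventually_gt_atTop 0] with t ht
  rw [rpow_add ht, ← sqrt_eq_rpow, profile, sqrt_mul hb.le, rpow_two]
  ring

lemma profile_bounded {a b β : ℝ} (ha : 0 < a) (hb : 0 < b) (hβ : 0 < β) :
    ∃ C, ∀ t, |profile a b β t| ≤ C := by
  obtain ⟨T, hT⟩ := eventually_atTop.1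
    ((profile_tendsto ha hb hβ).eventually (gt_mem_nhds one_pos))
  obtain ⟨C, hC⟩ := (isCompact_Icc (a := 0) (b := T)).exists_bound_of_continuousOn
    (profile_continuous a b β).continuousOn
  refine ⟨max 1 C, fun t => ?_⟩
  rcases le_total t 0 with h | h
  · simp [profile_of_nonpos hb h]
  rcases le_total t T with h' | h'
  · exact (hC t ⟨h, h'⟩).trans (le_max_right _ _)
  · rw [abs_of_nonneg (profile_nonneg hb)]
    exact (hT t h').le.trans (le_max_left _ _)

/-! ### The derivative of theta and the convolution -/

/-- No differentiability of `theta` is needed: `deriv` is bounded by any local Lipschitz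
constant, also where it is a junk `0`. -/
lemma thetaX_le {ε a b β L x t : ℝ} (hε : 0 < ε) (hb : 0 < b)
    (hx : 0 < x) (hxL : x ≤ L) (ht : 0 < t) :
    |thetaX ε a b β L x t|
      ≤ 1 / (2 * √(π * ε)) * (16 * ε / (x / 4) ^ 3) * (∑' n : ℤ, 1 / (|(n : ℝ)| + 1) ^ 3)
        * profile a b β t := by
  have hD : 0 ≤ 1 / (2 * √(π * ε)) * (16 * ε / (x / 4) ^ 3)
      * (∑' n : ℤ, 1 / (|(n : ℝ)| + 1) ^ 3) * profile a b β t := by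
    have h1 : 0 ≤ ∑' n : ℤ, 1 / (|(n : ℝ)| + 1) ^ 3 := tsum_nonneg fun n => by positivity
    have h2 := profile_nonneg (a := a) (β := β) (t := t) hb
    positivity
  have := norm_deriv_le_of_lipschitzOn (f := fun y => theta ε a b β L y t) (x₀ := x)
    (Ioo_mem_nhds (a := x / 2) (b := 3 * x / 2) (by linarith) (by linarith))
    (C := ⟨_, hD⟩) (LipschitzOnWith.of_dist_le_mul fun y hy z hz => by
      exact theta_lip hε hb hx hxL hy hz ht)
  exact this

/-- if `φ` is continuously differentiable on `[0,∞)`, has a finite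
limit at `∞`, and `φ'` is integrable on `[0,∞)`, then for `0 < x ≤ L`,
`∫₀^t θ_x(x,t−τ) φ'(τ) dτ → 0` as `t → ∞`. -/
theorem boundary_convolution_vanishes (ε a b β L : ℝ)
    (hε : 0 < ε) (ha : 0 < a) (hb : 0 < b) (hβ : 0 < β) (hL : 0 < L)
    (φ φ' : ℝ → ℝ)
    (φderiv : ∀ t ∈ Set.Ici (0:ℝ), HasDerivWithinAt φ (φ' t) (Set.Ici 0) t)
    (φ'cont : ContinuousOn φ' (Set.Ici 0))
    (φlim : ∃ l : ℝ, Filter.Tendsto φ Filter.atTop (nhds l))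
    (φ'int : IntegrableOn φ' (Set.Ici 0)) :
    ∀ x : ℝ, 0 < x → x ≤ L →
      Filter.Tendsto (fun t : ℝ => ∫ τ in (0:ℝ)..t, thetaX ε a b β L x (t - τ) * φ' τ)
        Filter.atTop (nhds 0) := by
  intro x hx hxL
  set D : ℝ := 1 / (2 * √(π * ε)) * (16 * ε / (x / 4) ^ 3)
    * (∑' n : ℤ, 1 / (|(n : ℝ)| + 1) ^ 3) with hDdef
  have hD : 0 ≤ D := by
    have h1 : 0 ≤ ∑' n : ℤ, 1 / (|(n : ℝ)| + 1) ^ 3 := tsum_nonneg fun n => by positivity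
    positivity
  obtain ⟨C, hC⟩ := profile_bounded (β := β) ha hb hβ
  have hC0 : 0 ≤ C := (abs_nonneg _).trans (hC 0)
  have hint : IntegrableOn φ' (Set.Ioi 0) := φ'int.mono_set Ioi_subset_Ici_self
  have hmeas : ∀ t, AEStronglyMeasurable (fun τ => D * profile a b β (t - τ) * |φ' τ|)
      (volume.restrict (Set.Ioi 0)) := fun t =>
    (Continuous.aestronglyMeasurable (continuous_const.mul
      ((profile_continuous a b β).comp (continuous_const.sub continuous_id)))).mul
      hint.aestronglyMeasurable.norm
  have hbd : ∀ t τ, ‖D * profile a b β (t - τ) * |φ' τ|‖ ≤ D * C * ‖φ' τ‖ := by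
    intro t τ
    rw [norm_mul, norm_mul, norm_of_nonneg hD, norm_eq_abs, norm_eq_abs, abs_abs]
    exact mul_le_mul_of_nonneg_right (mul_le_mul_of_nonneg_left (hC _) hD) (abs_nonneg _)
  have hI : ∀ t, IntegrableOn (fun τ => D * profile a b β (t - τ) * |φ' τ|) (Set.Ioi 0) :=
    fun t => (hint.norm.const_mul (D * C)).mono' (hmeas t) (Eventually.of_forall (hbd t))
  have hlim : Tendsto (fun t => ∫ τ in Set.Ioi (0:ℝ), D * profile a b β (t - τ) * |φ' τ|)
      atTop (𝓝 0) := by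
    have := MeasureTheory.tendsto_integral_filter_of_dominated_convergence
      (μ := volume.restrict (Set.Ioi (0:ℝ))) (l := atTop)
      (F := fun t τ => D * profile a b β (t - τ) * |φ' τ|) (f := fun _ => 0)
      (fun τ => D * C * ‖φ' τ‖) (Eventually.of_forall hmeas)
      (Eventually.of_forall fun t => Eventually.of_forall (hbd t)) (hint.norm.const_mul _)
      (Eventually.of_forall fun τ => by
        have h := (((profile_tendsto (b := b) ha hb hβ).comp
          (tendsto_atTop_add_const_right atTop (-τ) tendsto_id)).const_mul D).mul_const (|φ' τ|)
        simpa [Function.comp_def, sub_eq_add_neg] using h)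
    simpa using this
  -- Only the dominating integrand has to be measurable, so measurability of `θ_x` never enters.
  refine squeeze_zero_norm' ?_ hlim
  filter_upwards [eventually_gt_atTop 0] with t ht
  have hIoc : Set.Ioc 0 t ⊆ Set.Ioi (0:ℝ) := fun _ h => h.1
  refine (intervalIntegral.norm_integral_le_of_norm_le
    (g := fun τ => D * profile a b β (t - τ) * |φ' τ|) ht.le ?_ ?_).trans ?_
  -- The bound on `θ_x` needs positive time, so the null set `τ = t` is discarded.
  · filter_upwards [Measure.ae_ne volume t] with τ hne hτ
    rw [norm_mul, norm_eq_abs, norm_eq_abs]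
    gcongr
    exact thetaX_le hε hb hx hxL (sub_pos.2 (lt_of_le_of_ne hτ.2 hne))
  · exact (intervalIntegrable_iff_integrableOn_Ioc_of_le ht.le).2 ((hI t).mono_set hIoc)
  · rw [intervalIntegral.integral_of_le ht.le]
    refine setIntegral_mono_set (hI t) (Eventually.of_forall fun τ => ?_)
      (LE.le.eventuallyLE hIoc)
    have := profile_nonneg (a := a) (β := β) (t := t - τ) hb
    simp only [Pi.zero_apply]
    positivity
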